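/- Let B = B(0,1) ⊂ ℝ² be the open unit disc. There exist constants C > 0, c > 0 and n₀ ≥ 1 such that for every n ≥ n₀ there is a smooth function ψ : ℝ² → ℝ, not identically zero, compactly supported in B, satisfying ∫ |∇ψ|² dx + 4n² ∫ |x|² ψ(x)² dx ≤ (4n + C e^{−c n}) ∫ ψ(x)² dx. Consequently the infimum over nonzero smooth compactly supported test functions in B of the Rayleigh quotient (∫|∇ψ|² + 4n²∫|x|²ψ²)/∫ψ² is at most 4n + C e^{−cn}. -/

import Mathlib

open Set MeasureTheory

noncomputable section

abbrev E2 := EuclideanSpace ℝ (Fin 2)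

lemma ibp_coord (F : E2 → ℝ) (hF : ContDiff ℝ (⊤ : ℕ∞) F) (hc : HasCompactSupport F) (i : Fin 2) :
    ∫ x : E2, x i * fderiv ℝ F x (EuclideanSpace.single i 1) = - ∫ x, F x := by
  have hF' : Continuous (fderiv ℝ F) := hF.continuous_fderiv (by simp)
  have hcF' := hc.fderiv (𝕜 := ℝ)
  have hpr : ∀ x : E2, fderiv ℝ (fun x : E2 => x i) x = EuclideanSpace.proj i := fun x =>
    (EuclideanSpace.proj i : E2 →L[ℝ] ℝ).fderiv
  have h := integral_mul_fderiv_eq_neg_fderiv_mul_of_integrable (μ := (volume : Measure E2))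
    (𝕜 := ℝ)
    (f := fun x : E2 => x i) (g := F) (v := EuclideanSpace.single i 1) ?_ ?_ ?_ ?_ ?_
  · rw [h]
    simp [hpr]
  · simp only [hpr]
    simpa using hF.continuous.integrable_of_hasCompactSupport hc
  · apply Continuous.integrable_of_hasCompactSupport
    · fun_prop
    · apply HasCompactSupport.mul_left
      exact hcF'.comp_left (g := fun L : E2 →L[ℝ] ℝ => L (EuclideanSpace.single i 1)) (by simp)
  · apply Continuous.integrable_of_hasCompactSupport
    · have := hF.continuous
      fun_prop
    · exact hc.mul_left
  · intro x _; fun_prop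
  · intro x _; exact hF.differentiable (by simp) x

lemma ibp_euler (F : E2 → ℝ) (hF : ContDiff ℝ (⊤ : ℕ∞) F) (hc : HasCompactSupport F) :
    Integrable (fun x : E2 => fderiv ℝ F x x) ∧
    ∫ x : E2, fderiv ℝ F x x = - 2 * ∫ x, F x := by
  have hF' : Continuous (fderiv ℝ F) := hF.continuous_fderiv (by simp)
  have hcF' := hc.fderiv (𝕜 := ℝ)
  have hi : ∀ i : Fin 2, Integrable
      (fun x : E2 => x i * fderiv ℝ F x (EuclideanSpace.single i 1)) := by
    intro i
    apply Continuous.integrable_of_hasCompactSupport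
    · fun_prop
    · apply HasCompactSupport.mul_left
      exact hcF'.comp_left (g := fun L : E2 →L[ℝ] ℝ => L (EuclideanSpace.single i 1)) (by simp)
  have he : (fun x : E2 => fderiv ℝ F x x) = fun x : E2 =>
      x 0 * fderiv ℝ F x (EuclideanSpace.single 0 1) +
      x 1 * fderiv ℝ F x (EuclideanSpace.single 1 1) := by
    funext x
    have hx : x = x 0 • (EuclideanSpace.single 0 1 : E2) + x 1 • (EuclideanSpace.single 1 1 : E2) := by
      ext i; fin_cases i <;> simp
    conv_lhs => rw [show fderiv ℝ F x x = fderiv ℝ F x (x 0 • (EuclideanSpace.single 0 1 : E2) + x 1 • (EuclideanSpace.single 1 1 : E2)) from congrArg _ hx]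
    simp
  rw [he]
  refine ⟨(hi 0).add (hi 1), ?_⟩
  rw [integral_add (hi 0) (hi 1), ibp_coord F hF hc, ibp_coord F hF hc]
  ring

lemma key_pointwise (q : E2 → ℝ) (hq : ContDiff ℝ (⊤ : ℕ∞) q) (n : ℝ) (x : E2) :
    ‖gradient (fun y : E2 => Real.exp (-n * ‖y‖ ^ 2) * q y) x‖ ^ 2
      + 4 * n ^ 2 * (‖x‖ ^ 2 * (Real.exp (-n * ‖x‖ ^ 2) * q x) ^ 2)
    = Real.exp (-n * ‖x‖ ^ 2) ^ 2 * ‖gradient q x‖ ^ 2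
      - 2 * n * fderiv ℝ (fun y : E2 => (Real.exp (-n * ‖y‖ ^ 2) * q y) ^ 2) x x := by
  have hqd : HasFDerivAt q (fderiv ℝ q x) x := (hq.differentiable (by simp) x).hasFDerivAt
  have hn : HasFDerivAt (fun y : E2 => ‖y‖ ^ 2) (2 • innerSL ℝ x) x :=
    (hasStrictFDerivAt_norm_sq x).hasFDerivAt
  have hψ := ((hn.const_mul (-n)).exp).mul hqd
  have hψ2 := hψ.pow 2
  have hqg : ∀ v, fderiv ℝ q x v = inner ℝ (gradient q x) v := by
    intro v; simp [gradient]
  have hg : gradient (fun y : E2 => Real.exp (-n * ‖y‖ ^ 2) * q y) x =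
      Real.exp (-n * ‖x‖ ^ 2) • gradient q x
        - (2 * n * (Real.exp (-n * ‖x‖ ^ 2) * q x)) • x := by
    apply HasGradientAt.gradient
    rw [hasGradientAt_iff_hasFDerivAt]
    refine hψ.congr_fderiv ?_
    ext v
    simp [inner_sub_left]
    ring
  have hF : fderiv ℝ (fun y : E2 => (Real.exp (-n * ‖y‖ ^ 2) * q y) ^ 2) x x =
      2 * (Real.exp (-n * ‖x‖ ^ 2) * q x) * (Real.exp (-n * ‖x‖ ^ 2) * inner ℝ (gradient q x) x
        - 2 * n * ‖x‖ ^ 2 * (Real.exp (-n * ‖x‖ ^ 2) * q x)) := by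
    have := hψ2.fderiv
    erw [this]
    simp [← hqg]
    ring
  rw [hg, hF, norm_sub_sq_real, norm_smul, norm_smul, inner_smul_left, inner_smul_right]
  simp only [mul_pow, Real.norm_eq_abs, sq_abs, conj_trivial]
  ring

lemma main_exists : ∃ C : ℝ, 0 < C ∧ ∀ n : ℕ, ∃ ψ : E2 → ℝ,
          ContDiff ℝ (⊤ : ℕ∞) ψ ∧ ψ ≠ 0 ∧ HasCompactSupport ψ ∧
          tsupport ψ ⊆ Metric.ball (0 : E2) 1 ∧ 0 < ∫ x, (ψ x) ^ 2 ∧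
          (∫ x, ‖gradient ψ x‖ ^ 2) + 4 * (n : ℝ) ^ 2 * ∫ x, ‖x‖ ^ 2 * (ψ x) ^ 2 ≤
            (4 * (n : ℝ) + C * Real.exp (-(3/8 : ℝ) * n)) * ∫ x, (ψ x) ^ 2 := by
  let b : ContDiffBump (0 : E2) := ⟨1/2, 3/4, by norm_num, by norm_num⟩
  have hb : ContDiff ℝ (⊤ : ℕ∞) (b : E2 → ℝ) := b.contDiff
  have hbc : HasCompactSupport (b : E2 → ℝ) := b.hasCompactSupport
  have gcont : ∀ f : E2 → ℝ, ContDiff ℝ (⊤ : ℕ∞) f → Continuous (gradient f) := fun f hf =>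
    (InnerProductSpace.toDual ℝ E2).symm.continuous.comp (hf.continuous_fderiv (by simp))
  have gcomp : ∀ f : E2 → ℝ, HasCompactSupport f → HasCompactSupport (fun x => ‖gradient f x‖ ^ 2) :=
    fun f hf => (hf.fderiv (𝕜 := ℝ)).comp_left
      (g := fun L : E2 →L[ℝ] ℝ => ‖(InnerProductSpace.toDual ℝ E2).symm L‖ ^ 2) (by simp)
  have gint : ∀ f : E2 → ℝ, ContDiff ℝ (⊤ : ℕ∞) f → HasCompactSupport f →
      Integrable (fun x => ‖gradient f x‖ ^ 2) := fun f hf hc =>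
    ((gcont f hf).norm.pow 2).integrable_of_hasCompactSupport (gcomp f hc)
  set K : ℝ := ∫ x, ‖gradient (b : E2 → ℝ) x‖ ^ 2 with hK
  set V : ℝ := volume.real (Metric.ball (0 : E2) (1/4)) with hV
  have hK0 : 0 ≤ K := integral_nonneg fun x => by positivity
  have hV0 : 0 < V := by
    rw [hV, measureReal_def, ENNReal.toReal_pos_iff]
    exact ⟨Metric.measure_ball_pos _ _ (by norm_num), measure_ball_lt_top⟩
  refine ⟨K / V + 1, by positivity, fun n => ?_⟩
  set ψ : E2 → ℝ := fun y => Real.exp (-(n : ℝ) * ‖y‖ ^ 2) * b y with hψdef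
  have hg : ContDiff ℝ (⊤ : ℕ∞) (fun y : E2 => Real.exp (-(n : ℝ) * ‖y‖ ^ 2)) :=
    (contDiff_const.mul (contDiff_norm_sq ℝ)).exp
  have hψ : ContDiff ℝ (⊤ : ℕ∞) ψ := hg.mul hb
  have hψc : HasCompactSupport ψ := hbc.mul_left
  have hFs : ContDiff ℝ (⊤ : ℕ∞) (fun x => ψ x ^ 2) := hψ.pow 2
  have hFc : HasCompactSupport (fun x => ψ x ^ 2) :=
    hψc.comp_left (g := fun t : ℝ => t ^ 2) (by simp)
  have hFi : Integrable (fun x => ψ x ^ 2) := hFs.continuous.integrable_of_hasCompactSupport hFc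
  have hlow : Real.exp (-(n : ℝ) / 8) * V ≤ ∫ x, ψ x ^ 2 := by
    calc Real.exp (-(n : ℝ) / 8) * V
        = ∫ x in Metric.ball (0 : E2) (1/4), Real.exp (-(n : ℝ) / 8) := by
          rw [setIntegral_const, smul_eq_mul, mul_comm]
      _ ≤ ∫ x in Metric.ball (0 : E2) (1/4), ψ x ^ 2 := by
          apply setIntegral_mono_on (integrableOn_const (by exact measure_ball_lt_top.ne)) hFi.integrableOn
            measurableSet_ball
          intro x hx
          have hx' : ‖x‖ < 1/4 := by simpa using hx
          have h1 : b x = 1 := b.one_of_mem_closedBall (by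
            simp only [mem_closedBall_zero_iff]; show ‖x‖ ≤ 1/2; linarith)
          simp only [hψdef, h1, mul_one, ← Real.exp_nat_mul]
          apply Real.exp_le_exp.mpr
          have : ‖x‖ ^ 2 ≤ 1/16 := by nlinarith [norm_nonneg x]
          have hn : (0:ℝ) ≤ n := n.cast_nonneg
          push_cast
          nlinarith
      _ ≤ ∫ x, ψ x ^ 2 := setIntegral_le_integral hFi (Filter.Eventually.of_forall fun x => by positivity)
  have hpos : 0 < ∫ x, ψ x ^ 2 := lt_of_lt_of_le (by positivity) hlow
  have hgi : Integrable (fun x : E2 => Real.exp (-(n : ℝ) * ‖x‖ ^ 2) ^ 2 * ‖gradient (b : E2 → ℝ) x‖ ^ 2) := by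
    apply Continuous.integrable_of_hasCompactSupport
    · exact (hg.continuous.pow 2).mul ((gcont _ hb).norm.pow 2)
    · exact (gcomp _ hbc).mul_left
  have hup : ∫ x : E2, Real.exp (-(n : ℝ) * ‖x‖ ^ 2) ^ 2 * ‖gradient (b : E2 → ℝ) x‖ ^ 2
      ≤ Real.exp (-(n : ℝ) / 2) * K := by
    rw [hK, ← integral_const_mul]
    apply integral_mono hgi ((gint _ hb hbc).const_mul _)
    intro x
    by_cases hx : ‖x‖ < 1/2
    · have h0 : gradient (b : E2 → ℝ) x = 0 := by
        have : (b : E2 → ℝ) =ᶠ[nhds x] 1 := b.eventuallyEq_one_of_mem_ball (by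
          rw [mem_ball_zero_iff]; exact hx)
        rw [this.gradient_eq]
        simp [gradient]
      simp [h0]
    · refine mul_le_mul_of_nonneg_right ?_ (by positivity)
      rw [← Real.exp_nat_mul]
      apply Real.exp_le_exp.mpr
      have : 1/4 ≤ ‖x‖ ^ 2 := by nlinarith
      have hn : (0:ℝ) ≤ n := n.cast_nonneg
      push_cast
      nlinarith
  have hxi : Integrable (fun x : E2 => ‖x‖ ^ 2 * ψ x ^ 2) := by
    apply Continuous.integrable_of_hasCompactSupport
    · exact (continuous_norm.pow 2).mul hFs.continuous
    · exact hFc.mul_left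
  obtain ⟨hei, he⟩ := ibp_euler _ hFs hFc
  refine ⟨ψ, hψ, ?_, hψc, ?_, hpos, ?_⟩
  · intro h
    simp [h] at hpos
  · refine (closure_mono (Function.support_mul_subset_right _ _)).trans ?_
    change tsupport (b : E2 → ℝ) ⊆ _
    rw [b.tsupport_eq]
    exact Metric.closedBall_subset_ball (by show (3/4 : ℝ) < 1; norm_num)
  · have heq : (∫ x, ‖gradient ψ x‖ ^ 2) + 4 * (n : ℝ) ^ 2 * ∫ x, ‖x‖ ^ 2 * (ψ x) ^ 2
        = (∫ x : E2, Real.exp (-(n : ℝ) * ‖x‖ ^ 2) ^ 2 * ‖gradient (b : E2 → ℝ) x‖ ^ 2)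
          + 4 * n * ∫ x, ψ x ^ 2 := by
      rw [← integral_const_mul, ← integral_add (gint _ hψ hψc) (hxi.const_mul _)]
      simp only [hψdef]
      simp_rw [key_pointwise b hb]
      rw [integral_sub hgi (hei.const_mul _), integral_const_mul, he]
      ring
    rw [heq]
    have hexp : Real.exp (-(n : ℝ) / 2) = Real.exp (-(3/8 : ℝ) * n) * Real.exp (-(n : ℝ) / 8) := by
      rw [← Real.exp_add]; ring_nf
    have h3 : Real.exp (-(n : ℝ) / 2) * K ≤
        (K / V + 1) * Real.exp (-(3/8 : ℝ) * n) * ∫ x, ψ x ^ 2 := by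
      calc Real.exp (-(n : ℝ) / 2) * K
          = (K / V) * Real.exp (-(3/8 : ℝ) * n) * (Real.exp (-(n : ℝ) / 8) * V) := by
            rw [hexp]; field_simp
        _ ≤ (K / V + 1) * Real.exp (-(3/8 : ℝ) * n) * ∫ x, ψ x ^ 2 := by
            gcongr
            linarith
    linarith

/-- Rayleigh quotient bound for the harmonic-oscillator-type operator
`-Δ + 4n²|x|²` on the unit disc `B(0,1) ⊂ ℝ²`: there are `C, c > 0` and `n₀ ≥ 1` such
that for every `n ≥ n₀` there is a nonzero smooth test function `ψ` compactly supported
in `B` with `∫|∇ψ|² + 4n²∫|x|²ψ² ≤ (4n + C e^{-cn}) ∫ψ²`; consequently the infimum of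
the Rayleigh quotient over such test functions is at most `4n + C e^{-cn}`. -/
theorem oscillator_rayleigh_quotient_bound :
    ∃ C : ℝ, 0 < C ∧ ∃ c : ℝ, 0 < c ∧ ∃ n₀ : ℕ, 1 ≤ n₀ ∧
      ∀ n : ℕ, n₀ ≤ n →
        (∃ ψ : EuclideanSpace ℝ (Fin 2) → ℝ,
          ContDiff ℝ (⊤ : ℕ∞) ψ ∧ ψ ≠ 0 ∧ HasCompactSupport ψ ∧
          tsupport ψ ⊆ Metric.ball (0 : EuclideanSpace ℝ (Fin 2)) 1 ∧
          (∫ x, ‖gradient ψ x‖ ^ 2) + 4 * (n : ℝ) ^ 2 * ∫ x, ‖x‖ ^ 2 * (ψ x) ^ 2 ≤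
            (4 * (n : ℝ) + C * Real.exp (-c * n)) * ∫ x, (ψ x) ^ 2) ∧
        sInf {r : ℝ | ∃ ψ : EuclideanSpace ℝ (Fin 2) → ℝ,
            ContDiff ℝ (⊤ : ℕ∞) ψ ∧ ψ ≠ 0 ∧ HasCompactSupport ψ ∧
            tsupport ψ ⊆ Metric.ball (0 : EuclideanSpace ℝ (Fin 2)) 1 ∧
            r = ((∫ x, ‖gradient ψ x‖ ^ 2) +
                  4 * (n : ℝ) ^ 2 * ∫ x, ‖x‖ ^ 2 * (ψ x) ^ 2) / ∫ x, (ψ x) ^ 2} ≤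
          4 * (n : ℝ) + C * Real.exp (-c * n) := by
  obtain ⟨C, hC, h⟩ := main_exists
  refine ⟨C, hC, 3/8, by norm_num, 1, le_rfl, fun n _ => ?_⟩
  obtain ⟨ψ, h1, h2, h3, h4, h5, h6⟩ := h n
  refine ⟨⟨ψ, h1, h2, h3, h4, h6⟩, ?_⟩
  refine csInf_le_of_le ⟨0, ?_⟩ ⟨ψ, h1, h2, h3, h4, rfl⟩ ((div_le_iff₀ h5).mpr h6)
  rintro r ⟨φ, -, -, -, -, rfl⟩
  have a1 : 0 ≤ ∫ x, ‖gradient φ x‖ ^ 2 := integral_nonneg fun x => by positivity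
  have a2 : 0 ≤ ∫ x, ‖x‖ ^ 2 * (φ x) ^ 2 := integral_nonneg fun x => by positivity
  have a3 : 0 ≤ ∫ x, (φ x) ^ 2 := integral_nonneg fun x => by positivity
  positivity
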